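/- Let 𝕄 be a partial mixed graph, Y a vertex of 𝕄, M a completion of 𝕄, and V a vertex. Let Q_V = {V' ∈ Anc(Y,𝕄) : V and V' are adjacent in 𝕄 and the mark at V on the edge V–V' is a circle}. If the induced subgraph 𝕄[Q_V] is not a complete graph (i.e., some two vertices of Q_V are nonadjacent in 𝕄), then V is an ancestor of Y in M. -/

import Mathlib

/-- Marks at edge ends in a partial mixed graph. -/
inductive Mark : Type
  | tail
  | arrow
  | circle
deriving DecidableEq

/-- A partial mixed graph (PMG): a symmetric irreflexive adjacency relation together
with, for each ordered pair `(a, b)` of adjacent vertices, a mark `mark a b` at `b` on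
the edge `a–b`, such that no edge has tails at both endpoints. -/
structure PMG (V : Type) where
  adj : V → V → Prop
  symm : ∀ a b, adj a b → adj b a
  irrefl : ∀ a, ¬ adj a a
  mark : V → V → Mark
  noDoubleTail : ∀ a b, adj a b → ¬ (mark a b = Mark.tail ∧ mark b a = Mark.tail)

namespace PMG

variable {V : Type}

/-- `a → b`: adjacent, tail at `a`, arrowhead at `b`. -/
def dir (G : PMG V) (a b : V) : Prop :=
  G.adj a b ∧ G.mark b a = Mark.tail ∧ G.mark a b = Mark.arrow

/-- `a ↔ b`: adjacent, arrowheads at both endpoints. -/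
def bidir (G : PMG V) (a b : V) : Prop :=
  G.adj a b ∧ G.mark b a = Mark.arrow ∧ G.mark a b = Mark.arrow

/-- `a` is an ancestor of `b`: `a = b` or there is a directed path from `a` to `b`. -/
def Anc (G : PMG V) (a b : V) : Prop :=
  Relation.ReflTransGen G.dir a b

/-- `a` is an ancestor of some vertex of the set `S`. -/
def AncSet (G : PMG V) (a : V) (S : Set V) : Prop :=
  ∃ v ∈ S, G.Anc a v

/-- A mixed graph: a PMG with no circle marks. -/
def IsMixed (G : PMG V) : Prop :=
  ∀ a b, G.adj a b → G.mark a b ≠ Mark.circle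

/-- Ancestral: no directed cycles and no almost directed cycles. -/
def Ancestral (G : PMG V) : Prop :=
  ∀ a b, G.Anc a b → a ≠ b → ¬ G.dir b a ∧ ¬ G.bidir a b

/-- Unshielded collider `(a, b, c)`: `a, c` both adjacent to `b`, `a` and `c`
distinct and nonadjacent, arrowheads at `b` on both edges. -/
def UnshieldedCollider (G : PMG V) (a b c : V) : Prop :=
  a ≠ c ∧ G.adj a b ∧ G.adj c b ∧ ¬ G.adj a c ∧
    G.mark a b = Mark.arrow ∧ G.mark c b = Mark.arrow

/-- `M` is a completion of the PMG `H`: same vertices and adjacencies, all non-circle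
marks of `H` occur identically in `M`, `M` is an ancestral mixed graph, and every
unshielded collider of `M` is already an unshielded collider of `H`. -/
def Completion (H M : PMG V) : Prop :=
  (∀ a b, M.adj a b ↔ H.adj a b) ∧
  (∀ a b, H.adj a b → H.mark a b ≠ Mark.circle → M.mark a b = H.mark a b) ∧
  M.IsMixed ∧ M.Ancestral ∧
  (∀ a b c, M.UnshieldedCollider a b c → H.UnshieldedCollider a b c)

/-- An edge usable in a possible directed path from `a` to `b`:
adjacent, no arrowhead at `a`, no tail at `b`. -/
def possEdge (G : PMG V) (a b : V) : Prop :=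
  G.adj a b ∧ G.mark b a ≠ Mark.arrow ∧ G.mark a b ≠ Mark.tail

/-- A circle edge: adjacent with circle marks at both endpoints. -/
def circleEdge (G : PMG V) (a b : V) : Prop :=
  G.adj a b ∧ G.mark a b = Mark.circle ∧ G.mark b a = Mark.circle

/-- `p 0, …, p n` is a path: distinct vertices, consecutive ones adjacent. -/
def IsPathOn (G : PMG V) (p : ℕ → V) (n : ℕ) : Prop :=
  (∀ i ≤ n, ∀ j ≤ n, p i = p j → i = j) ∧ ∀ i < n, G.adj (p i) (p (i+1))

/-- `p 0, …, p n` is a possible directed path. -/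
def IsPossDirPathOn (G : PMG V) (p : ℕ → V) (n : ℕ) : Prop :=
  (∀ i ≤ n, ∀ j ≤ n, p i = p j → i = j) ∧ ∀ i < n, G.possEdge (p i) (p (i+1))

/-- `p 0, …, p n` is a circle path. -/
def IsCirclePathOn (G : PMG V) (p : ℕ → V) (n : ℕ) : Prop :=
  (∀ i ≤ n, ∀ j ≤ n, p i = p j → i = j) ∧ ∀ i < n, G.circleEdge (p i) (p (i+1))

/-- The path `p 0, …, p n` is uncovered: any two nonconsecutive neighbours of an
internal vertex are nonadjacent. -/
def UncoveredOn (G : PMG V) (p : ℕ → V) (n : ℕ) : Prop :=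
  ∀ i, i + 2 ≤ n → ¬ G.adj (p i) (p (i+2))

/-- `F_x` relative to `V'`: the vertices of `V'` adjacent to `x` whose edge carries
a circle or an arrowhead at `x`. -/
def Fset (G : PMG V) (V' : Set V) (x : V) : Set V :=
  {v | v ∈ V' ∧ G.adj v x ∧ (G.mark v x = Mark.circle ∨ G.mark v x = Mark.arrow)}

/-- `p 0, …, p n` is an unbridged path relative to `V'` in `G`: an uncovered circle
path with at least one edge, lying in `G[−V']`, with
`F_{p 0} \ F_{p 1} ≠ ∅` and `F_{p n} \ F_{p (n-1)} ≠ ∅`. -/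
def UnbridgedOn (G : PMG V) (V' : Set V) (p : ℕ → V) (n : ℕ) : Prop :=
  1 ≤ n ∧ G.IsCirclePathOn p n ∧ G.UncoveredOn p n ∧
  (∀ i ≤ n, p i ∉ V') ∧
  (G.Fset V' (p 0) \ G.Fset V' (p 1)).Nonempty ∧
  (G.Fset V' (p n) \ G.Fset V' (p (n-1))).Nonempty

/-- The set `S_A`: `A` together with all vertices adjacent to `A` whose edge has an
arrowhead at `A`. -/
def SA (G : PMG V) (A : V) : Set V :=
  {A} ∪ {v | G.adj v A ∧ G.mark v A = Mark.arrow}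

end PMG

namespace PMG

/-- `Q_v`: the vertices `v'` that are ancestors of `Y` in `G`, adjacent to `v`,
with a circle at `v` on the edge `v–v'`. -/
def QV {V : Type} (G : PMG V) (Y v : V) : Set V :=
  {v' | G.Anc v' Y ∧ G.adj v v' ∧ G.mark v' v = Mark.circle}

end PMG

/-! Two nonadjacent vertices `a, b` of `Q_v` form an unshielded triple around `v` which is not a
collider of `𝕄`, so it cannot become one in the completion `M`: `M` has an edge `v → a` or `v → b`.
Directed paths of `𝕄` survive in `M`, so this edge extends to a directed path to `Y`. -/

namespace PMG

/-- `M` refines `H`: it has the same adjacencies and agrees with `H` on every non-circle mark.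
The circles of `H` may be oriented or kept. -/
structure IsRefinement {V : Type} (H M : PMG V) : Prop where
  adj_iff : ∀ a b, M.adj a b ↔ H.adj a b
  mark_eq : ∀ a b, H.adj a b → H.mark a b ≠ Mark.circle → M.mark a b = H.mark a b

/-- `M` is obtained from `H` by orienting every circle without creating an unshielded collider.
This is the notion of a completion with ancestrality dropped. -/
structure IsOrientation {V : Type} (H M : PMG V) : Prop extends IsRefinement H M where
  isMixed : M.IsMixed
  unshieldedCollider :
    ∀ a b c, M.UnshieldedCollider a b c → H.UnshieldedCollider a b c

variable {V : Type} {G H M : PMG V} {a b v Y : V}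

theorem Completion.isOrientation (hHM : H.Completion M) : H.IsOrientation M :=
  let ⟨adj_iff, mark_eq, isMixed, _, unshieldedCollider⟩ := hHM
  { adj_iff, mark_eq, isMixed, unshieldedCollider }

theorem IsRefinement.dir (hHM : H.IsRefinement M) (hab : H.dir a b) : M.dir a b := by
  obtain ⟨hadj, htail, harrow⟩ := hab
  refine ⟨(hHM.adj_iff a b).2 hadj, ?_, ?_⟩
  · rw [hHM.mark_eq b a (H.symm a b hadj) (by simp [htail]), htail]
  · rw [hHM.mark_eq a b hadj (by simp [harrow]), harrow]

theorem IsRefinement.anc (hHM : H.IsRefinement M) (hab : H.Anc a b) : M.Anc a b :=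
  Relation.ReflTransGen.mono (fun _ _ => hHM.dir) _ _ hab

theorem IsMixed.dir_of_mark_eq_tail (hG : G.IsMixed) (hab : G.adj a b)
    (htail : G.mark b a = Mark.tail) : G.dir a b := by
  refine ⟨hab, htail, ?_⟩
  cases hmark : G.mark a b with
  | tail => exact absurd ⟨hmark, htail⟩ (G.noDoubleTail a b hab)
  | arrow => rfl
  | circle => exact absurd hmark (hG a b hab)

theorem IsMixed.mark_eq_arrow_of_not_dir (hG : G.IsMixed) (hab : G.adj a b)
    (hdir : ¬ G.dir a b) : G.mark b a = Mark.arrow := by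
  cases hmark : G.mark b a with
  | tail => exact absurd (hG.dir_of_mark_eq_tail hab hmark) hdir
  | arrow => rfl
  | circle => exact absurd hmark (hG b a (G.symm a b hab))

theorem IsMixed.dir_or_dir_of_not_unshieldedCollider (hG : G.IsMixed) (hva : G.adj v a)
    (hvb : G.adj v b) (hne : a ≠ b) (hnadj : ¬ G.adj a b)
    (hnc : ¬ G.UnshieldedCollider a v b) : G.dir v a ∨ G.dir v b := by
  by_contra! ⟨hnva, hnvb⟩
  exact hnc ⟨hne, G.symm v a hva, G.symm v b hvb, hnadj,
    hG.mark_eq_arrow_of_not_dir hva hnva, hG.mark_eq_arrow_of_not_dir hvb hnvb⟩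

theorem IsOrientation.dir_or_dir_of_not_unshieldedCollider (hHM : H.IsOrientation M)
    (hva : H.adj v a) (hvb : H.adj v b) (hne : a ≠ b) (hnadj : ¬ H.adj a b)
    (hnc : ¬ H.UnshieldedCollider a v b) : M.dir v a ∨ M.dir v b :=
  hHM.isMixed.dir_or_dir_of_not_unshieldedCollider ((hHM.adj_iff v a).2 hva)
    ((hHM.adj_iff v b).2 hvb) hne (mt (hHM.adj_iff a b).1 hnadj)
    (mt (hHM.unshieldedCollider a v b) hnc)

theorem not_unshieldedCollider_of_mem_QV (ha : a ∈ H.QV Y v) : ¬ H.UnshieldedCollider a v b := by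
  obtain ⟨-, -, hcircle⟩ := ha
  rintro ⟨-, -, -, -, harrow, -⟩
  simp [hcircle] at harrow

end PMG

theorem ancestor_of_Y_of_QV_not_complete_general {V : Type} {H M : PMG V}
    (hHM : H.IsOrientation M) {Y v a b : V} (haY : H.Anc a Y) (hbY : H.Anc b Y)
    (hva : H.adj v a) (hvb : H.adj v b) (hne : a ≠ b) (hnadj : ¬ H.adj a b)
    (hnc : ¬ H.UnshieldedCollider a v b) : M.Anc v Y := by
  rcases hHM.dir_or_dir_of_not_unshieldedCollider hva hvb hne hnadj hnc with hdir | hdir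
  · exact (hHM.anc haY).head hdir
  · exact (hHM.anc hbY).head hdir

/-- If the induced subgraph of the PMG `𝕄` on `Q_v` is not complete (some two of
its vertices are nonadjacent), then `v` is an ancestor of `Y` in every completion
`M` of `𝕄`. -/
theorem ancestor_of_Y_of_QV_not_complete {V : Type} (H M : PMG V)
    (hHM : PMG.Completion H M) (Y v : V)
    (hnc : ∃ a ∈ H.QV Y v, ∃ b ∈ H.QV Y v, a ≠ b ∧ ¬ H.adj a b) :
    M.Anc v Y := by
  obtain ⟨a, ha, b, hb, hne, hnadj⟩ := hnc
  exact ancestor_of_Y_of_QV_not_complete_general hHM.isOrientation ha.1 hb.1 ha.2.1 hb.2.1 hne hnadj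
    (PMG.not_unshieldedCollider_of_mem_QV ha)
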